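/- There is a universal constant C ∈ (0,∞) such that for every p, q ∈ [1,∞), every Banach space (X,‖·‖_X), and every smooth compactly supported f : ℍ(ℝ) → X, (∫₀^∞ (∫_{ℍ(ℝ)} ‖f(hc^t) − f(h)‖_X^p dμ(h))^{q/p} dt/t^{1+q/2})^{1/q} ≤ C (∫₀^∞ t^{q/2−1} ‖Q_t * f‖_{L_p(ℍ(ℝ),X)}^q dt)^{1/q}. -/

import Mathlib

open MeasureTheory

/-- The real Heisenberg group `ℍ(ℝ)`, identified with `ℝ³`; the Lebesgue measure
(`volume`) is a Haar measure for the Heisenberg group structure. -/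
abbrev HR : Type := ℝ × ℝ × ℝ

namespace HR

/-- Right translation by the central element `c^t`: `h ↦ h·c^t`. -/
def vmul (t : ℝ) (h : HR) : HR := (h.1, h.2.1, h.2.2 + t)

/-- The Poisson kernel `P_t(u) = t/(π(t²+u²))` on `ℝ`. -/
noncomputable def Pker (t u : ℝ) : ℝ := t / (Real.pi * (t ^ 2 + u ^ 2))

/-- `Q_t(u) = ∂P_t/∂t(u) = (u²−t²)/(π(t²+u²)²)`. -/
noncomputable def Qker (t u : ℝ) : ℝ := (u ^ 2 - t ^ 2) / (Real.pi * (t ^ 2 + u ^ 2) ^ 2)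

variable {X : Type*} [NormedAddCommGroup X] [NormedSpace ℝ X]

/-- Convolution of a kernel `ψ : ℝ → ℝ` with `g : ℍ(ℝ) → X` along the center:
`(ψ*g)(x,y,z) = ∫_ℝ ψ(u) g(x,y,z−u) du`. -/
noncomputable def conv (ψ : ℝ → ℝ) (g : HR → X) (h : HR) : X :=
  ∫ u : ℝ, ψ u • g (h.1, h.2.1, h.2.2 - u)

/-- The left-invariant horizontal derivative `∂_a f = ∂f/∂x`. -/
noncomputable def da (f : HR → X) (h : HR) : X := fderiv ℝ f h (1, 0, 0)

/-- The left-invariant horizontal derivative `∂_b f = ∂f/∂y + x·∂f/∂z`. -/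
noncomputable def db (f : HR → X) (h : HR) : X :=
  fderiv ℝ f h (0, 1, 0) + h.1 • fderiv ℝ f h (0, 0, 1)

end HR

open scoped ENNReal

/-- Minkowski's integral inequality, with a measurable nonvanishing majorant of the norms. -/
theorem lintegral_Lp_lintegral_le_of_le {α β : Type*} [MeasurableSpace α] [MeasurableSpace β]
    {μ : Measure α} {ν : Measure β} [SFinite μ] [SFinite ν] {p : ℝ} (hp : 1 ≤ p)
    {F : β → α → ℝ≥0∞} (hF : Measurable (Function.uncurry F)) {w : β → ℝ≥0∞} (hw : Measurable w)
    (hw0 : ∀ b, w b ≠ 0) (hFw : ∀ b, (∫⁻ a, F b a ^ p ∂μ) ^ (1 / p) ≤ w b) :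
    (∫⁻ a, (∫⁻ b, F b a ∂ν) ^ p ∂μ) ^ (1 / p) ≤ ∫⁻ b, w b ∂ν := by
  have hp0 : 0 < p := by linarith
  by_cases hW : ∫⁻ b, w b ∂ν = ∞
  · simp [hW]
  have hwfin : ∀ᵐ b ∂ν, w b ≠ ∞ := by
    filter_upwards [ae_lt_top hw hW] with b hb using hb.ne
  have hFw' : ∀ b, ∫⁻ a, F b a ^ p ∂μ ≤ w b ^ p := by
    intro b
    have := ENNReal.rpow_le_rpow (hFw b) hp0.le
    rwa [← ENNReal.rpow_mul, one_div, inv_mul_cancel₀ hp0.ne', ENNReal.rpow_one] at this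
  have hmeas : Measurable (Function.uncurry fun b a => F b a ^ p * w b ^ (1 - p)) :=
    (hF.pow_const p).mul ((hw.pow_const _).comp measurable_fst)
  have hJ : ∀ a, (∫⁻ b, F b a ∂ν) ^ p ≤
      (∫⁻ b, F b a ^ p * w b ^ (1 - p) ∂ν) * (∫⁻ b, w b ∂ν) ^ (p - 1) := by
    intro a
    have h1 : ∫⁻ b, F b a ∂ν =
        ∫⁻ b, (F b a ^ p * w b ^ (1 - p)) ^ (1 / p) * w b ^ (1 - 1 / p) ∂ν := by
      refine lintegral_congr_ae ?_
      filter_upwards [hwfin] with b hb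
      rw [ENNReal.mul_rpow_of_nonneg _ _ (by positivity), ← ENNReal.rpow_mul, ← ENNReal.rpow_mul,
        mul_assoc, ← ENNReal.rpow_add _ _ (hw0 b) hb]
      have e1 : p * (1 / p) = 1 := by field_simp
      have e2 : (1 - p) * (1 / p) + (1 - 1 / p) = 0 := by field_simp; ring
      rw [e1, e2]; simp
    have h2 := ENNReal.lintegral_mul_norm_pow_le (μ := ν)
      (f := fun b => F b a ^ p * w b ^ (1 - p)) (g := w)
      (hmeas.comp measurable_prodMk_right).aemeasurable hw.aemeasurable
      (p := 1 / p) (q := 1 - 1 / p) (by positivity)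
      (by rw [sub_nonneg, div_le_one hp0]; exact hp) (by ring)
    rw [← h1] at h2
    have h3 := ENNReal.rpow_le_rpow h2 hp0.le
    rw [ENNReal.mul_rpow_of_nonneg _ _ hp0.le, ← ENNReal.rpow_mul, ← ENNReal.rpow_mul] at h3
    have e1 : 1 / p * p = 1 := by field_simp
    have e2 : (1 - 1 / p) * p = p - 1 := by field_simp
    rwa [e1, e2, ENNReal.rpow_one] at h3
  have hmain : ∫⁻ a, (∫⁻ b, F b a ∂ν) ^ p ∂μ ≤ (∫⁻ b, w b ∂ν) ^ p := by
    calc ∫⁻ a, (∫⁻ b, F b a ∂ν) ^ p ∂μ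
        ≤ ∫⁻ a, (∫⁻ b, F b a ^ p * w b ^ (1 - p) ∂ν) * (∫⁻ b, w b ∂ν) ^ (p - 1) ∂μ :=
          lintegral_mono hJ
      _ = (∫⁻ b, ∫⁻ a, F b a ^ p * w b ^ (1 - p) ∂μ ∂ν) * (∫⁻ b, w b ∂ν) ^ (p - 1) := by
          rw [lintegral_mul_const _ hmeas.lintegral_prod_left,
            lintegral_lintegral_swap hmeas.aemeasurable]
      _ ≤ (∫⁻ b, w b ∂ν) * (∫⁻ b, w b ∂ν) ^ (p - 1) := by
          gcongr ?_ * _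
          refine lintegral_mono_ae ?_
          filter_upwards [hwfin] with b hb
          have hb' : Measurable fun a => F b a ^ p :=
            (hF.comp measurable_prodMk_left).pow_const p
          rw [lintegral_mul_const _ hb']
          calc (∫⁻ a, F b a ^ p ∂μ) * w b ^ (1 - p) ≤ w b ^ p * w b ^ (1 - p) := by
                gcongr; exact hFw' b
            _ = w b := by
                rw [← ENNReal.rpow_add _ _ (hw0 b) hb]; simp
      _ = (∫⁻ b, w b ∂ν) ^ p := by
          by_cases h0 : ∫⁻ b, w b ∂ν = 0
          · rw [h0, zero_mul, ENNReal.zero_rpow_of_pos hp0]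
          · nth_rewrite 1 [← ENNReal.rpow_one (∫⁻ b, w b ∂ν)]
            rw [← ENNReal.rpow_add _ _ h0 hW]; simp
  calc _ ≤ ((∫⁻ b, w b ∂ν) ^ p) ^ (1 / p) := ENNReal.rpow_le_rpow hmain (by positivity)
    _ = _ := by rw [← ENNReal.rpow_mul]; simp [hp0.ne']

/-- Minkowski's integral inequality for `ℝ≥0∞`-valued functions. -/
theorem lintegral_Lp_lintegral_le {α β : Type*} [MeasurableSpace α] [MeasurableSpace β]
    {μ : Measure α} {ν : Measure β} [SFinite μ] [SigmaFinite ν] {p : ℝ} (hp : 1 ≤ p)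
    {F : β → α → ℝ≥0∞} (hF : Measurable (Function.uncurry F)) :
    (∫⁻ a, (∫⁻ b, F b a ∂ν) ^ p ∂μ) ^ (1 / p) ≤
      ∫⁻ b, (∫⁻ a, F b a ^ p ∂μ) ^ (1 / p) ∂ν := by
  refine ENNReal.le_of_forall_pos_le_add fun ε hε _ => ?_
  obtain ⟨e, he0, hem, he⟩ := exists_pos_lintegral_lt_of_sigmaFinite ν
    (ε := (ε : ℝ≥0∞)) (by exact_mod_cast hε.ne')
  have hm : Measurable fun b => (∫⁻ a, F b a ^ p ∂μ) ^ (1 / p) :=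
    ((hF.pow_const p).lintegral_prod_right').pow_const _
  refine (lintegral_Lp_lintegral_le_of_le (w := fun b =>
    (∫⁻ a, F b a ^ p ∂μ) ^ (1 / p) + e b) hp hF (hm.add hem.coe_nnreal_ennreal)
    (fun b h => ?_) (fun b => le_self_add)).trans ?_
  · have := (add_eq_zero.1 h).2
    exact (he0 b).ne' (by exact_mod_cast this)
  · rw [lintegral_add_left hm]
    gcongr

theorem lintegral_Ioi_comp_mul {f : ℝ → ℝ≥0∞} {v : ℝ} (hv : 0 < v) :
    ∫⁻ s in Set.Ioi (0 : ℝ), f (s * v) =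
      ENNReal.ofReal v⁻¹ * ∫⁻ s in Set.Ioi (0 : ℝ), f s := by
  have hemb : MeasurableEmbedding (fun s : ℝ => s * v) :=
    (Homeomorph.mulRight₀ v hv.ne').measurableEmbedding
  have h := Real.map_volume_mul_right hv.ne'
  rw [← lintegral_indicator measurableSet_Ioi, ← lintegral_indicator measurableSet_Ioi]
  have h2 := hemb.lintegral_map (μ := volume) ((Set.Ioi (0:ℝ)).indicator f)
  rw [h, lintegral_smul_measure, abs_of_pos (by positivity)] at h2
  rw [← smul_eq_mul, h2]
  refine lintegral_congr fun s => ?_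
  simp only [Set.indicator, Set.mem_Ioi, mul_pos_iff_of_pos_right hv]

/-- The Hardy kernel dominating the vertical increments by the `g`-function. -/
noncomputable def hardyKernel (v : ℝ) : ℝ≥0∞ :=
  (Set.Iio (1 : ℝ)).indicator (fun _ => 2) v +
    (Set.Ioi (1 / 2 : ℝ)).indicator (fun v => ENNReal.ofReal (2 / v)) v

theorem measurable_hardyKernel : Measurable hardyKernel := by
  unfold hardyKernel
  refine Measurable.add (measurable_const.indicator measurableSet_Iio)
    (Measurable.indicator (by fun_prop) measurableSet_Ioi)

theorem lintegral_hardyKernel_lt_top :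
    ∫⁻ v in Set.Ioi (0 : ℝ), hardyKernel v * ENNReal.ofReal (v ^ (-(1 / 2) : ℝ)) < ∞ := by
  have hm : Measurable fun v : ℝ => ENNReal.ofReal (v ^ (-(1 / 2) : ℝ)) := by fun_prop
  unfold hardyKernel
  simp_rw [add_mul]
  rw [lintegral_add_left ((measurable_const.indicator measurableSet_Iio).fun_mul hm)]
  refine ENNReal.add_lt_top.2 ⟨?_, ?_⟩
  · have h : IntegrableOn (fun v : ℝ => v ^ (-(1 / 2) : ℝ)) (Set.Ioo 0 1) :=
      (intervalIntegral.integrableOn_Ioo_rpow_iff one_pos).2 (by norm_num)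
    have e : ∀ v : ℝ, (Set.Iio (1 : ℝ)).indicator (fun _ => (2 : ℝ≥0∞)) v *
        ENNReal.ofReal (v ^ (-(1 / 2) : ℝ)) =
        (Set.Iio (1 : ℝ)).indicator (fun v => 2 * ENNReal.ofReal (v ^ (-(1 / 2) : ℝ))) v := by
      intro v; by_cases hv : v ∈ Set.Iio (1 : ℝ) <;> simp [hv]
    simp_rw [e]
    rw [lintegral_indicator measurableSet_Iio, Measure.restrict_restrict measurableSet_Iio,
      lintegral_const_mul _ hm, Set.inter_comm, Set.Ioi_inter_Iio]
    refine ENNReal.mul_lt_top (by simp) ?_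
    exact (hasFiniteIntegral_iff_ofReal (by
      filter_upwards [ae_restrict_mem measurableSet_Ioo] with v hv
      exact Real.rpow_nonneg hv.1.le _)).1 h.2
  · have h : IntegrableOn (fun v : ℝ => v ^ (-(3 / 2) : ℝ)) (Set.Ioi (1 / 2)) :=
      integrableOn_Ioi_rpow_of_lt (by norm_num) (by norm_num)
    have e : ∀ v : ℝ, (Set.Ioi (1 / 2 : ℝ)).indicator (fun v => ENNReal.ofReal (2 / v)) v *
        ENNReal.ofReal (v ^ (-(1 / 2) : ℝ)) =
        (Set.Ioi (1 / 2 : ℝ)).indicator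
          (fun v => 2 * ENNReal.ofReal (v ^ (-(3 / 2) : ℝ))) v := by
      intro v
      by_cases hv : v ∈ Set.Ioi (1 / 2 : ℝ)
      · have hv0 : (0 : ℝ) < v := by simp at hv; linarith
        simp only [hv, Set.indicator_of_mem]
        rw [← ENNReal.ofReal_mul (by positivity)]
        have : (2 : ℝ≥0∞) = ENNReal.ofReal 2 := by simp
        rw [this, ← ENNReal.ofReal_mul (by positivity)]
        congr 1
        have : (-(3 / 2) : ℝ) = -1 + -(1 / 2) := by norm_num
        rw [this, Real.rpow_add hv0, Real.rpow_neg_one]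
        ring
      · simp only [Set.indicator_of_notMem hv, zero_mul]
    simp_rw [e]
    rw [lintegral_indicator measurableSet_Ioi, Measure.restrict_restrict measurableSet_Ioi,
      lintegral_const_mul _ (by fun_prop)]
    refine ENNReal.mul_lt_top (by simp) ?_
    have h' := h.mono_set (Set.inter_subset_left (t := Set.Ioi (0 : ℝ)))
    exact (hasFiniteIntegral_iff_ofReal (by
      filter_upwards [ae_restrict_mem (measurableSet_Ioi.inter measurableSet_Ioi)] with v hv
      exact Real.rpow_nonneg (le_of_lt hv.2) _)).1 h'.2

theorem lintegral_le_lintegral_hardyKernel {A B : ℝ → ℝ≥0∞} (hB : Measurable B)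
    {s : ℝ} (hs : 0 < s)
    (hA : A s ≤ 2 * (∫⁻ r in Set.Ioo 0 s, B r) +
      ∫⁻ r in Set.Ioi s, ENNReal.ofReal (2 * s / r) * B (r / 2)) :
    A s ≤ ENNReal.ofReal s * ∫⁻ v in Set.Ioi (0 : ℝ), hardyKernel v * B (v * s) := by
  refine hA.trans (le_of_eq ?_)
  have hs' : ENNReal.ofReal s * ENNReal.ofReal s⁻¹ = 1 := by
    rw [← ENNReal.ofReal_mul hs.le, mul_inv_cancel₀ hs.ne', ENNReal.ofReal_one]
  have h1 : ∫⁻ r in Set.Ioo 0 s, B r = ENNReal.ofReal s *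
      ∫⁻ v in Set.Ioi (0 : ℝ), (Set.Iio (1 : ℝ)).indicator (fun _ => 1) v * B (v * s) := by
    have := lintegral_Ioi_comp_mul (f := (Set.Iio s).indicator B) hs
    rw [setLIntegral_indicator measurableSet_Iio, Set.inter_comm, Set.Ioi_inter_Iio] at this
    rw [← one_mul (∫⁻ r in Set.Ioo 0 s, B r), ← hs', mul_assoc, ← this]
    congr 1
    refine lintegral_congr fun v => ?_
    have e : v * s < s ↔ v < 1 := by
      constructor <;> intro h <;> nlinarith
    by_cases hv : v < 1 <;> simp [Set.indicator, e, hv, hs']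
  have h2 : ∫⁻ r in Set.Ioi s, ENNReal.ofReal (2 * s / r) * B (r / 2) = ENNReal.ofReal s *
      ∫⁻ v in Set.Ioi (0 : ℝ), (Set.Ioi (1 / 2 : ℝ)).indicator
        (fun v => ENNReal.ofReal (2 / v)) v * B (v * s) := by
    have hs2 : 0 < 2 * s := by positivity
    have := lintegral_Ioi_comp_mul (f := (Set.Ioi s).indicator
      fun r => ENNReal.ofReal (2 * s / r) * B (r / 2)) hs2
    rw [setLIntegral_indicator measurableSet_Ioi, Set.Ioi_inter_Ioi, sup_eq_left.2 hs.le] at this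
    have hs' : ENNReal.ofReal (2 * s) * ENNReal.ofReal (2 * s)⁻¹ = 1 := by
      rw [← ENNReal.ofReal_mul hs2.le, mul_inv_cancel₀ hs2.ne', ENNReal.ofReal_one]
    rw [← one_mul (∫⁻ r in Set.Ioi s, _), ← hs', mul_assoc, ← this, mul_comm 2 s,
      ENNReal.ofReal_mul hs.le, mul_assoc, ← lintegral_const_mul' _ _ (by simp)]
    congr 1
    refine lintegral_congr fun v => ?_
    have e : s < v * (s * 2) ↔ 1 / 2 < v := by
      constructor <;> intro h <;> nlinarith
    simp only [Set.indicator, Set.mem_Ioi, e]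
    split_ifs with hv
    · have hv0 : 0 < v := by linarith
      rw [← mul_assoc, ← ENNReal.ofReal_mul (by norm_num)]
      congr 2
      · field_simp
      · ring
    · simp
  have hm : Measurable fun v => B (v * s) := hB.comp (by fun_prop)
  rw [h1, h2, mul_left_comm, ← mul_add, ← lintegral_const_mul _
    ((measurable_const.indicator measurableSet_Iio).fun_mul hm), ← lintegral_add_left
    (((measurable_const.indicator measurableSet_Iio).fun_mul hm).const_mul _)]
  congr 1
  refine lintegral_congr fun v => ?_
  unfold hardyKernel
  rw [add_mul, ← mul_assoc]
  congr 2
  simp only [Set.indicator]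
  split_ifs <;> simp

theorem lintegral_hardy_le {q : ℝ} (hq : 1 ≤ q) {A B : ℝ → ℝ≥0∞} (hB : Measurable B)
    (hA : ∀ s, 0 < s → A s ≤ ENNReal.ofReal s *
      ∫⁻ v in Set.Ioi (0 : ℝ), hardyKernel v * B (v * s)) :
    (∫⁻ s in Set.Ioi (0 : ℝ), A s ^ q * ENNReal.ofReal (s ^ (-(1 + q / 2)))) ^ (1 / q) ≤
      (∫⁻ v in Set.Ioi (0 : ℝ), hardyKernel v * ENNReal.ofReal (v ^ (-(1 / 2) : ℝ))) *
      (∫⁻ r in Set.Ioi (0 : ℝ), ENNReal.ofReal (r ^ (q / 2 - 1)) * B r ^ q) ^ (1 / q) := by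
  have hq0 : 0 < q := by linarith
  set F : ℝ → ℝ → ℝ≥0∞ := fun v s =>
    ENNReal.ofReal (s ^ (1 / 2 - 1 / q)) * (hardyKernel v * B (v * s)) with hFdef
  have hF : Measurable (Function.uncurry F) := by
    refine Measurable.mul (by fun_prop) (Measurable.mul (measurable_hardyKernel.comp measurable_fst)
      (hB.comp (by fun_prop)))
  have hBs : ∀ s, Measurable fun v => hardyKernel v * B (v * s) := fun s =>
    measurable_hardyKernel.mul (hB.comp (by fun_prop))
  have h1 : ∫⁻ s in Set.Ioi (0 : ℝ), A s ^ q * ENNReal.ofReal (s ^ (-(1 + q / 2))) ≤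
      ∫⁻ s in Set.Ioi (0 : ℝ), (∫⁻ v in Set.Ioi (0 : ℝ), F v s) ^ q := by
    refine setLIntegral_mono' measurableSet_Ioi fun s hs => ?_
    have hs : 0 < s := hs
    rw [hFdef, lintegral_const_mul _ (hBs s), ENNReal.mul_rpow_of_nonneg _ _ hq0.le]
    calc _ ≤ (ENNReal.ofReal s *
        ∫⁻ v in Set.Ioi (0 : ℝ), hardyKernel v * B (v * s)) ^ q *
          ENNReal.ofReal (s ^ (-(1 + q / 2))) := by gcongr; exact hA s hs
      _ = _ := by
        rw [ENNReal.mul_rpow_of_nonneg _ _ hq0.le, mul_right_comm]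
        congr 1
        rw [ENNReal.ofReal_rpow_of_pos hs, ENNReal.ofReal_rpow_of_pos (by positivity),
          ← ENNReal.ofReal_mul (by positivity), ← Real.rpow_add hs, ← Real.rpow_mul hs.le]
        congr 2
        field_simp
        ring
  refine (ENNReal.rpow_le_rpow h1 (by positivity)).trans ?_
  refine (lintegral_Lp_lintegral_le hq hF).trans ?_
  rw [← lintegral_mul_const _ (measurable_hardyKernel.fun_mul (by fun_prop))]
  refine setLIntegral_mono' measurableSet_Ioi fun v hv => le_of_eq ?_
  have hv : 0 < v := hv
  have hB2 : Measurable fun s => ENNReal.ofReal (s ^ (q / 2 - 1)) * B s ^ q :=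
    Measurable.mul (by fun_prop) (hB.pow_const _)
  have hB3 : Measurable fun s => ENNReal.ofReal ((s * v) ^ (q / 2 - 1)) * B (s * v) ^ q :=
    hB2.comp (measurable_id.mul_const v)
  have h2 : ∫⁻ s in Set.Ioi (0 : ℝ), F v s ^ q =
      hardyKernel v ^ q * ENNReal.ofReal (v ^ (-(q / 2))) *
      ∫⁻ r in Set.Ioi (0 : ℝ), ENNReal.ofReal (r ^ (q / 2 - 1)) * B r ^ q := by
    have e : ENNReal.ofReal (v ^ (-(q / 2))) =
      ENNReal.ofReal (v ^ (1 - q / 2)) * ENNReal.ofReal v⁻¹ := by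
      rw [← ENNReal.ofReal_mul (by positivity), ← Real.rpow_neg_one v, ← Real.rpow_add hv]
      congr 2; ring
    rw [e, ← mul_assoc, mul_assoc _ (ENNReal.ofReal v⁻¹), ← lintegral_Ioi_comp_mul hv,
      ← lintegral_const_mul _ hB3]
    refine setLIntegral_congr_fun measurableSet_Ioi fun s hs => ?_
    have hs : 0 < s := hs
    simp only [hFdef]
    rw [ENNReal.mul_rpow_of_nonneg _ _ hq0.le, ENNReal.mul_rpow_of_nonneg _ _ hq0.le,
      ENNReal.ofReal_rpow_of_pos (by positivity), ← Real.rpow_mul hs.le, mul_comm s v,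
      Real.mul_rpow hv.le hs.le, ENNReal.ofReal_mul (by positivity)]
    have e1 : ENNReal.ofReal (v ^ (1 - q / 2)) * ENNReal.ofReal (v ^ (q / 2 - 1)) = 1 := by
      rw [← ENNReal.ofReal_mul (by positivity), ← Real.rpow_add hv]
      simp
    have e2 : (1 / 2 - 1 / q) * q = q / 2 - 1 := by field_simp
    rw [e2]
    calc _ = 1 * hardyKernel v ^ q * ENNReal.ofReal (s ^ (q / 2 - 1)) * B (v * s) ^ q := by ring
      _ = _ := by rw [← e1]; ring
  rw [h2, ENNReal.mul_rpow_of_nonneg _ _ (by positivity),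
    ENNReal.mul_rpow_of_nonneg _ _ (by positivity), ← ENNReal.rpow_mul,
    ENNReal.ofReal_rpow_of_pos (by positivity), ← Real.rpow_mul hv.le]
  have e1 : q * (1 / q) = 1 := by field_simp
  have e2 : -(q / 2) * (1 / q) = -(1 / 2) := by field_simp
  rw [e1, e2, ENNReal.rpow_one]

open Filter Topology Real in
theorem tendsto_log_sq_add_sub_log (a b x : ℝ) {l : Filter ℝ}
    (hl : Tendsto (fun y : ℝ => y⁻¹) l (𝓝 0)) (hl0 : ∀ᶠ y in l, y ≠ 0) (ha : 0 < a) (hb : 0 < b) :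
    Tendsto (fun y => log (y ^ 2 + b ^ 2) - log ((x - y) ^ 2 + a ^ 2)) l (𝓝 0) := by
  have h : Tendsto (fun z : ℝ => log (1 + b ^ 2 * z ^ 2) - log ((x * z - 1) ^ 2 + a ^ 2 * z ^ 2))
      (𝓝 0) (𝓝 (log (1 + b ^ 2 * 0 ^ 2) - log ((x * 0 - 1) ^ 2 + a ^ 2 * 0 ^ 2))) := by
    refine ContinuousAt.tendsto ?_
    refine ContinuousAt.sub (ContinuousAt.log (by fun_prop) (by norm_num))
      (ContinuousAt.log (by fun_prop) (by norm_num))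
  have h' := h.comp hl
  norm_num at h'
  refine h'.congr' ?_
  filter_upwards [hl0] with y hy
  have e1 : y ^ 2 + b ^ 2 = y ^ 2 * (1 + b ^ 2 * y⁻¹ ^ 2) := by field_simp
  have e2 : (x - y) ^ 2 + a ^ 2 = y ^ 2 * ((x * y⁻¹ - 1) ^ 2 + a ^ 2 * y⁻¹ ^ 2) := by field_simp
  have h3 : 0 < (x - y) ^ 2 + a ^ 2 := by positivity
  have h4 : (x * y⁻¹ - 1) ^ 2 + a ^ 2 * y⁻¹ ^ 2 ≠ 0 := by
    intro h0; rw [e2, h0] at h3; simp at h3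
  rw [e1, e2, log_mul (by positivity) (by positivity), log_mul (by positivity) h4]
  simp

namespace HR

open Filter Topology

theorem Pker_nonneg {t : ℝ} (ht : 0 < t) (u : ℝ) : 0 ≤ Pker t u := by
  unfold Pker; positivity

theorem Pker_eq_cauchyPDFReal {t : ℝ} (ht : 0 < t) :
    Pker t = ProbabilityTheory.cauchyPDFReal 0 t.toNNReal := by
  ext u
  simp only [Pker, ProbabilityTheory.cauchyPDFReal_def, sub_zero, Real.coe_toNNReal _ ht.le]
  rw [add_comm (t ^ 2)]
  field_simp

theorem integrable_Pker {t : ℝ} (ht : 0 < t) : Integrable (Pker t) := by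
  rw [Pker_eq_cauchyPDFReal ht]
  exact ProbabilityTheory.integrable_cauchyPDFReal 0

theorem integral_Pker {t : ℝ} (ht : 0 < t) : ∫ u, Pker t u = 1 := by
  rw [Pker_eq_cauchyPDFReal ht]
  exact ProbabilityTheory.integral_cauchyPDFReal_eq_one 0 (by simpa using ht)

theorem Pker_le {t : ℝ} (ht : 0 < t) (u : ℝ) : Pker t u ≤ 1 / (Real.pi * t) := by
  unfold Pker
  rw [div_le_div_iff₀ (by positivity) (by positivity)]
  nlinarith [Real.pi_pos, mul_nonneg Real.pi_pos.le (sq_nonneg u)]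

theorem measurable_Pker : Measurable (Function.uncurry Pker) := by
  unfold Pker Function.uncurry; fun_prop

theorem measurable_Qker : Measurable (Function.uncurry Qker) := by
  unfold Qker Function.uncurry; fun_prop

theorem abs_Qker_le {t : ℝ} (ht : 0 < t) (u : ℝ) : |Qker t u| ≤ Pker t u / t := by
  have h : |u ^ 2 - t ^ 2| ≤ t ^ 2 + u ^ 2 := by
    rw [abs_le]; constructor <;> nlinarith [sq_nonneg u, sq_nonneg t]
  unfold Qker Pker
  rw [abs_div, abs_of_pos (by positivity : 0 < Real.pi * (t ^ 2 + u ^ 2) ^ 2),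
    div_div, div_le_div_iff₀ (by positivity) (by positivity)]
  calc _ ≤ (t ^ 2 + u ^ 2) * (Real.pi * (t ^ 2 + u ^ 2) * t) := by gcongr
    _ = _ := by ring

theorem abs_Qker_le_of_le {c t : ℝ} (hc : 0 < c) (hct : c ≤ t) (u : ℝ) :
    |Qker t u| ≤ Pker c u / c := by
  refine (abs_Qker_le (hc.trans_le hct) u).trans ?_
  have ht := hc.trans_le hct
  have e : ∀ s, 0 < s → Pker s u / s = 1 / (Real.pi * (s ^ 2 + u ^ 2)) := by
    intro s hs; unfold Pker; field_simp
  rw [e _ ht, e _ hc]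
  gcongr

theorem integrable_Qker {t : ℝ} (ht : 0 < t) : Integrable (Qker t) :=
  ((integrable_Pker ht).div_const t).mono'
    (measurable_Qker.comp measurable_prodMk_left).aestronglyMeasurable
    (Eventually.of_forall fun u => abs_Qker_le ht u)

theorem hasDerivAt_Pker {t : ℝ} (ht : 0 < t) (u : ℝ) :
    HasDerivAt (fun t => Pker t u) (Qker t u) t := by
  have h := (hasDerivAt_id t).div
    ((((hasDerivAt_id t).pow 2).add_const (u ^ 2)).const_mul Real.pi)
    (by simp only [id]; positivity : Real.pi * (id t ^ 2 + u ^ 2) ≠ 0)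
  refine h.congr_deriv ?_
  simp only [Qker, Pi.pow_apply, id]
  field_simp
  ring

theorem abs_Pker_add_sub_le {a s : ℝ} (ha : 0 < a) (hs : 0 ≤ s) (u : ℝ) :
    |Pker a (u + s) - Pker a u| ≤ s / (2 * a) * (Pker a (u + s) + Pker a u) := by
  set v := u + s with hv
  have e : Pker a v - Pker a u =
      a * s * (-(u + v)) / (Real.pi * (a ^ 2 + v ^ 2) * (a ^ 2 + u ^ 2)) := by
    unfold Pker; rw [hv]; field_simp; ring
  have e2 : s / (2 * a) * (Pker a v + Pker a u) =
      s * (2 * a ^ 2 + u ^ 2 + v ^ 2) / 2 / (Real.pi * (a ^ 2 + v ^ 2) * (a ^ 2 + u ^ 2)) := by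
    unfold Pker; field_simp; ring
  rw [e, e2, abs_div,
    abs_of_pos (by positivity : 0 < Real.pi * (a ^ 2 + v ^ 2) * (a ^ 2 + u ^ 2))]
  gcongr
  rw [abs_mul, abs_of_nonneg (by positivity : 0 ≤ a * s), mul_comm a s, mul_assoc, mul_div_assoc]
  gcongr
  rw [← abs_of_pos ha, ← abs_mul, abs_le, abs_of_pos ha]
  constructor <;> nlinarith [sq_nonneg (a + u), sq_nonneg (a - u), sq_nonneg (a + v),
    sq_nonneg (a - v)]

theorem integrable_Pker_sub_mul_Pker {a b : ℝ} (ha : 0 < a) (hb : 0 < b) (x : ℝ) :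
    Integrable fun y => Pker a (x - y) * Pker b y :=
  (integrable_Pker hb).bdd_mul (c := 1 / (Real.pi * a))
    (measurable_Pker.comp (by fun_prop : Measurable fun y => (a, x - y))).aestronglyMeasurable
    (Eventually.of_forall fun y => by
      rw [Real.norm_of_nonneg (Pker_nonneg ha _)]; exact Pker_le ha _)

open Real in
/-- The semigroup property of the Poisson kernel, away from the origin. -/
theorem integral_Pker_sub_mul_Pker {a b x : ℝ} (ha : 0 < a) (hb : 0 < b) (hx : x ≠ 0) :
    ∫ y, Pker a (x - y) * Pker b y = Pker (a + b) x := by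
  have hx2 : 0 < x ^ 2 := by positivity
  set N := (x ^ 2 + (a + b) ^ 2) * (x ^ 2 + (a - b) ^ 2) with hN
  have hN0 : 0 < N := by positivity
  set G : ℝ → ℝ := fun y => a * b / (π ^ 2 * N) *
    (x * (log (y ^ 2 + b ^ 2) - log ((x - y) ^ 2 + a ^ 2)) +
      (x ^ 2 + a ^ 2 - b ^ 2) / b * arctan (y / b) -
      (x ^ 2 + b ^ 2 - a ^ 2) / a * arctan ((x - y) / a)) with hG
  have hderiv : ∀ y, HasDerivAt G (Pker a (x - y) * Pker b y) y := by
    intro y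
    have hy1 : 0 < y ^ 2 + b ^ 2 := by positivity
    have hy2 : 0 < (x - y) ^ 2 + a ^ 2 := by positivity
    have d1 : HasDerivAt (fun y => log (y ^ 2 + b ^ 2)) (2 * y / (y ^ 2 + b ^ 2)) y := by
      have := (((hasDerivAt_id y).pow 2).add_const (b ^ 2)).log hy1.ne'
      exact this.congr_deriv (by simp)
    have d2 : HasDerivAt (fun y => log ((x - y) ^ 2 + a ^ 2))
        (-(2 * (x - y)) / ((x - y) ^ 2 + a ^ 2)) y := by
      have := ((((hasDerivAt_id y).const_sub x).pow 2).add_const (a ^ 2)).log hy2.ne'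
      exact this.congr_deriv (by simp)
    have d3 := ((hasDerivAt_id y).div_const b).arctan
    have d4 := (((hasDerivAt_id y).const_sub x).div_const a).arctan
    have := ((((d1.sub d2).const_mul x).add (d3.const_mul ((x ^ 2 + a ^ 2 - b ^ 2) / b))).sub
      (d4.const_mul ((x ^ 2 + b ^ 2 - a ^ 2) / a))).const_mul (a * b / (π ^ 2 * N))
    refine this.congr_deriv ?_
    have e3 : 1 + (y / b) ^ 2 = (y ^ 2 + b ^ 2) / b ^ 2 := by field_simp; ring
    have e4 : 1 + ((x - y) / a) ^ 2 = ((x - y) ^ 2 + a ^ 2) / a ^ 2 := by field_simp; ring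
    simp only [id, e3, e4, Pker]
    rw [add_comm (a ^ 2), add_comm (b ^ 2)]
    field_simp
    rw [hN]
    ring
  have hlim : ∀ (l : Filter ℝ) (m : ℝ), Tendsto (fun y : ℝ => y⁻¹) l (𝓝 0) →
      (∀ᶠ y in l, y ≠ 0) → Tendsto (fun y => arctan (y / b)) l (𝓝 m) →
      Tendsto (fun y => arctan ((x - y) / a)) l (𝓝 (-m)) →
      Tendsto G l (𝓝 (a * b / (π ^ 2 * N) * (x * 0 + (x ^ 2 + a ^ 2 - b ^ 2) / b * m -
        (x ^ 2 + b ^ 2 - a ^ 2) / a * (-m)))) := by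
    intro l m h1 h2 h3 h4
    exact ((((tendsto_log_sq_add_sub_log a b x h1 h2 ha hb).const_mul x).add
      (h3.const_mul _)).sub (h4.const_mul _)).const_mul _
  have htop := hlim atTop (π / 2) tendsto_inv_atTop_zero (eventually_ne_atTop 0)
    ((tendsto_nhds_of_tendsto_nhdsWithin tendsto_arctan_atTop).comp
      (tendsto_id.atTop_div_const hb))
    ((tendsto_nhds_of_tendsto_nhdsWithin tendsto_arctan_atBot).comp
      (Tendsto.atBot_div_const ha (tendsto_const_nhds.add_atBot tendsto_neg_atTop_atBot)))
  have hbot := hlim atBot (-(π / 2)) tendsto_inv_atBot_zero (eventually_ne_atBot 0)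
    ((tendsto_nhds_of_tendsto_nhdsWithin tendsto_arctan_atBot).comp
      (tendsto_id.atBot_div_const hb))
    (by
      rw [neg_neg]
      exact (tendsto_nhds_of_tendsto_nhdsWithin tendsto_arctan_atTop).comp
        (Tendsto.atTop_div_const ha (tendsto_const_nhds.add_atTop tendsto_neg_atBot_atTop)))
  rw [integral_of_hasDerivAt_of_tendsto hderiv (integrable_Pker_sub_mul_Pker ha hb x) hbot htop]
  unfold Pker
  field_simp
  rw [hN]
  ring

theorem integral_Pker_sub_mul_Qker {a x : ℝ} (ha : 0 < a) (hx : x ≠ 0) :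
    ∫ y, Pker a (x - y) * Qker a y = Qker (2 * a) x := by
  have hm : Measurable fun y => Pker a (x - y) :=
    measurable_Pker.comp (by fun_prop : Measurable fun y => (a, x - y))
  have h := hasDerivAt_integral_of_dominated_loc_of_deriv_le (μ := volume)
    (F := fun b y => Pker a (x - y) * Pker b y) (F' := fun b y => Pker a (x - y) * Qker b y)
    (x₀ := a) (s := Set.Ioi (a / 2))
    (bound := fun y => Pker a (x - y) * Pker (a / 2) y / (a / 2)) (Ioi_mem_nhds (by linarith))
    (Eventually.of_forall fun b => (hm.mul
      (measurable_Pker.comp measurable_prodMk_left)).aestronglyMeasurable)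
    (integrable_Pker_sub_mul_Pker ha ha x)
    (hm.mul (measurable_Qker.comp measurable_prodMk_left)).aestronglyMeasurable
    (Eventually.of_forall fun y b hb => by
      rw [norm_mul, Real.norm_of_nonneg (Pker_nonneg ha _), mul_div_assoc]
      exact mul_le_mul_of_nonneg_left (abs_Qker_le_of_le (by positivity) (le_of_lt hb) y)
        (Pker_nonneg ha _))
    ((integrable_Pker_sub_mul_Pker ha (by positivity) x).div_const _)
    (Eventually.of_forall fun y b hb =>
      (hasDerivAt_Pker ((by positivity : 0 < a / 2).trans hb) y).const_mul _)
  have h2 : HasDerivAt (fun b => Pker (a + b) x) (Qker (2 * a) x) a := by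
    have := (hasDerivAt_Pker (by positivity : 0 < a + a) x).comp_const_add a a
    rwa [← two_mul] at this
  refine h.2.unique (h2.congr_of_eventuallyEq ?_)
  filter_upwards [Ioi_mem_nhds ha] with b hb
  exact integral_Pker_sub_mul_Pker ha hb hx

end HR

open Filter Topology in
theorem enorm_sub_le_lintegral_enorm_deriv {X : Type*} [NormedAddCommGroup X] [NormedSpace ℝ X]
    [CompleteSpace X] {φ φ' : ℝ → X} (hφ : ∀ t, 0 < t → HasDerivAt φ (φ' t) t)
    (hφ' : StronglyMeasurable φ') {a b : ℝ} (ha : 0 < a) (hab : a ≤ b) :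
    ‖φ b - φ a‖ₑ ≤ ∫⁻ t in Set.Ioc a b, ‖φ' t‖ₑ := by
  by_cases hfin : ∫⁻ t in Set.Ioc a b, ‖φ' t‖ₑ = ∞
  · simp [hfin]
  have hint : IntervalIntegrable φ' volume a b :=
    (intervalIntegrable_iff_integrableOn_Ioc_of_le hab).2
      ⟨hφ'.aestronglyMeasurable, lt_top_iff_ne_top.2 hfin⟩
  rw [← intervalIntegral.integral_eq_sub_of_hasDerivAt (fun t ht => hφ t ?_) hint,
    intervalIntegral.integral_of_le hab]
  · exact enorm_integral_le_lintegral_enorm _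
  · rw [Set.uIcc_of_le hab] at ht
    exact ha.trans_le ht.1

namespace HR

open Filter Topology

section Fiber

variable {X : Type*} [NormedAddCommGroup X] {f : HR → X}

theorem continuous_fiber (hf : Continuous f) (h : HR) :
    Continuous fun u : ℝ => f (h.1, h.2.1, h.2.2 - u) := by fun_prop

theorem hasCompactSupport_fiber (hc : HasCompactSupport f) (h : HR) :
    HasCompactSupport fun u : ℝ => f (h.1, h.2.1, h.2.2 - u) := by
  have hiso : Isometry fun u : ℝ => ((h.1, h.2.1, h.2.2 - u) : HR) := by
    refine Isometry.of_dist_eq fun u v => ?_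
    rw [Prod.dist_eq, Prod.dist_eq, dist_self, dist_self, dist_sub_left]
    simp
  exact hc.comp_isClosedEmbedding hiso.isClosedEmbedding

theorem integrable_fiber (hf : Continuous f) (hc : HasCompactSupport f) (h : HR) :
    Integrable fun u : ℝ => f (h.1, h.2.1, h.2.2 - u) :=
  (continuous_fiber hf h).integrable_of_hasCompactSupport (hasCompactSupport_fiber hc h)

end Fiber

section Convolution

variable {X : Type*} [NormedAddCommGroup X] [NormedSpace ℝ X] {f : HR → X}

theorem stronglyMeasurable_conv_Qker (hf : Continuous f) :
    StronglyMeasurable (Function.uncurry fun t h => conv (Qker t) f h) := by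
  have h1 : StronglyMeasurable fun p : (ℝ × HR) × ℝ => Qker p.1.1 p.2 :=
    (measurable_Qker.comp (by fun_prop : Measurable fun p : (ℝ × HR) × ℝ =>
      (p.1.1, p.2))).stronglyMeasurable
  have h2 : StronglyMeasurable fun p : (ℝ × HR) × ℝ =>
      f (p.1.2.1, p.1.2.2.1, p.1.2.2.2 - p.2) :=
    (by fun_prop : Continuous fun p : (ℝ × HR) × ℝ =>
      f (p.1.2.1, p.1.2.2.1, p.1.2.2.2 - p.2)).stronglyMeasurable
  exact (h1.smul h2).integral_prod_right

theorem hasDerivAt_conv_Pker (hf : Continuous f) (hc : HasCompactSupport f) (h : HR) {t : ℝ}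
    (ht : 0 < t) : HasDerivAt (fun t => conv (Pker t) f h) (conv (Qker t) f h) t := by
  have hg := integrable_fiber hf hc h
  have ht2 : 0 < t / 2 := by positivity
  have hbdd : ∀ s, 0 < s → Integrable fun u => Pker s u • f (h.1, h.2.1, h.2.2 - u) :=
    fun s hs => hg.bdd_smul (1 / (Real.pi * s))
      (measurable_Pker.comp measurable_prodMk_left).aestronglyMeasurable
      (Eventually.of_forall fun u => by
        rw [Real.norm_of_nonneg (Pker_nonneg hs _)]; exact Pker_le hs _)
  exact (hasDerivAt_integral_of_dominated_loc_of_deriv_le (μ := volume)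
    (F := fun t u => Pker t u • f (h.1, h.2.1, h.2.2 - u))
    (F' := fun t u => Qker t u • f (h.1, h.2.1, h.2.2 - u))
    (x₀ := t) (s := Set.Ioi (t / 2))
    (bound := fun u => ‖Pker (t / 2) u • f (h.1, h.2.1, h.2.2 - u)‖ / (t / 2))
    (Ioi_mem_nhds (by linarith))
    (Eventually.of_forall fun s =>
      (measurable_Pker.comp measurable_prodMk_left).aestronglyMeasurable.smul
        hg.aestronglyMeasurable)
    (hbdd t ht)
    ((measurable_Qker.comp measurable_prodMk_left).aestronglyMeasurable.smul
        hg.aestronglyMeasurable)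
    (Eventually.of_forall fun u s hs => by
      rw [norm_smul, norm_smul, Real.norm_of_nonneg (Pker_nonneg ht2 _), mul_div_right_comm]
      exact mul_le_mul_of_nonneg_right (abs_Qker_le_of_le ht2 (le_of_lt hs) u) (norm_nonneg _))
    ((hbdd _ ht2).norm.div_const _)
    (Eventually.of_forall fun u s hs => (hasDerivAt_Pker (ht2.trans hs) u).smul_const _)).2

theorem conv_Pker_eq {t : ℝ} (ht : 0 < t) (h : HR) :
    conv (Pker t) f h = ∫ v : ℝ, Pker 1 v • f (h.1, h.2.1, h.2.2 - t * v) := by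
  have := Measure.integral_comp_mul_left (fun u => Pker t u • f (h.1, h.2.1, h.2.2 - u)) t
  rw [abs_of_pos (by positivity), eq_inv_smul_iff₀ ht.ne', ← integral_smul] at this
  rw [conv, ← this]
  refine integral_congr_ae (Eventually.of_forall fun v => ?_)
  simp only [smul_smul]
  congr 1
  unfold Pker
  field_simp

theorem tendsto_conv_Pker_nhdsGT_zero [CompleteSpace X] (hf : Continuous f)
    (hc : HasCompactSupport f) (h : HR) :
    Tendsto (fun t => conv (Pker t) f h) (𝓝[>] 0) (𝓝 (f h)) := by
  obtain ⟨M, hM⟩ := hc.exists_bound_of_continuous hf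
  have key : Tendsto (fun t : ℝ => ∫ v : ℝ, Pker 1 v • f (h.1, h.2.1, h.2.2 - t * v)) (𝓝[>] 0)
      (𝓝 (∫ v : ℝ, Pker 1 v • f h)) := by
    refine tendsto_integral_filter_of_dominated_convergence (fun v => Pker 1 v * M)
      (Eventually.of_forall fun t => (integrable_Pker one_pos).aestronglyMeasurable.smul
        (by fun_prop : Continuous fun v : ℝ =>
          f (h.1, h.2.1, h.2.2 - t * v)).aestronglyMeasurable)
      (Eventually.of_forall fun t => Eventually.of_forall fun v => ?_)
      ((integrable_Pker one_pos).mul_const M) (Eventually.of_forall fun v => ?_)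
    · rw [norm_smul, Real.norm_of_nonneg (Pker_nonneg one_pos _)]
      exact mul_le_mul_of_nonneg_left (hM _) (Pker_nonneg one_pos _)
    · have hcont : Continuous fun t : ℝ => Pker 1 v • f (h.1, h.2.1, h.2.2 - t * v) := by fun_prop
      have := hcont.tendsto 0
      simp only [zero_mul, sub_zero] at this
      exact this.mono_left nhdsWithin_le_nhds
  rw [integral_smul_const, integral_Pker one_pos, one_smul] at key
  refine key.congr' ?_
  filter_upwards [self_mem_nhdsWithin] with t ht using (conv_Pker_eq ht h).symm

theorem tendsto_conv_Pker_atTop (hf : Continuous f) (hc : HasCompactSupport f) (h : HR) :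
    Tendsto (fun t => conv (Pker t) f h) atTop (𝓝 0) := by
  have hg := integrable_fiber hf hc h
  refine squeeze_zero_norm' (a := fun t => (∫ u : ℝ, ‖f (h.1, h.2.1, h.2.2 - u)‖) / Real.pi / t)
    ?_ (tendsto_const_nhds.div_atTop tendsto_id)
  filter_upwards [eventually_gt_atTop 0] with t ht
  rw [conv, div_div, ← integral_div]
  refine norm_integral_le_of_norm_le (hg.norm.div_const _) (Eventually.of_forall fun u => ?_)
  rw [norm_smul, Real.norm_of_nonneg (Pker_nonneg ht _), div_eq_mul_one_div, mul_comm]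
  exact mul_le_mul_of_nonneg_left (Pker_le ht u) (norm_nonneg _)

theorem enorm_vmul_sub_le [CompleteSpace X] (hf : Continuous f) (hc : HasCompactSupport f)
    (h : HR) {s : ℝ} (hs : 0 < s) :
    ‖f (vmul s h) - f h‖ₑ ≤ (∫⁻ r in Set.Ioo 0 s, ‖conv (Qker r) f (vmul s h)‖ₑ) +
      (∫⁻ r in Set.Ioo 0 s, ‖conv (Qker r) f h‖ₑ) +
      ∫⁻ r in Set.Ioi s, ‖conv (Qker r) f (vmul s h) - conv (Qker r) f h‖ₑ := by
  have hm : ∀ h, StronglyMeasurable fun r => conv (Qker r) f h := fun h =>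
    (stronglyMeasurable_conv_Qker hf).comp_measurable (g := fun r => (r, h)) (by fun_prop)
  have h1 : ∀ h, ‖conv (Pker s) f h - f h‖ₑ ≤ ∫⁻ r in Set.Ioo 0 s, ‖conv (Qker r) f h‖ₑ := by
    intro h
    rw [setLIntegral_congr Ioo_ae_eq_Ioc]
    refine le_of_tendsto
      (tendsto_const_nhds.sub (tendsto_conv_Pker_nhdsGT_zero hf hc h)).enorm ?_
    filter_upwards [Ioo_mem_nhdsGT hs] with a ha
    exact (enorm_sub_le_lintegral_enorm_deriv (fun t ht => hasDerivAt_conv_Pker hf hc h ht)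
      (hm h) ha.1 ha.2.le).trans (lintegral_mono_set (Set.Ioc_subset_Ioc_left ha.1.le))
  have h2 : ‖conv (Pker s) f (vmul s h) - conv (Pker s) f h‖ₑ ≤
      ∫⁻ r in Set.Ioi s, ‖conv (Qker r) f (vmul s h) - conv (Qker r) f h‖ₑ := by
    have hlim := (((tendsto_conv_Pker_atTop hf hc (vmul s h)).sub
      (tendsto_conv_Pker_atTop hf hc h)).sub_const
        (conv (Pker s) f (vmul s h) - conv (Pker s) f h)).enorm
    rw [sub_zero, zero_sub, enorm_neg] at hlim
    refine le_of_tendsto hlim ?_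
    filter_upwards [eventually_ge_atTop s] with b hb
    exact (enorm_sub_le_lintegral_enorm_deriv
      (φ := fun t => conv (Pker t) f (vmul s h) - conv (Pker t) f h)
      (fun t ht => (hasDerivAt_conv_Pker hf hc _ ht).sub (hasDerivAt_conv_Pker hf hc h ht))
      ((hm _).sub (hm h)) hs hb).trans (lintegral_mono_set Set.Ioc_subset_Ioi_self)
  have e : f (vmul s h) - f h = -(conv (Pker s) f (vmul s h) - f (vmul s h)) +
      (conv (Pker s) f h - f h) + (conv (Pker s) f (vmul s h) - conv (Pker s) f h) := by abel
  rw [e]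
  refine (enorm_add_le _ _).trans (add_le_add ((enorm_add_le _ _).trans (add_le_add ?_ (h1 h))) h2)
  rw [enorm_neg]
  exact h1 _

end Convolution

end HR

namespace HR

open Filter Topology

theorem measurable_vmul (s : ℝ) : Measurable (vmul s) := by
  unfold vmul; fun_prop

theorem measurePreserving_vmul (s : ℝ) : MeasurePreserving (vmul s) :=
  (MeasurePreserving.id volume).prod
    ((MeasurePreserving.id volume).prod (measurePreserving_add_right volume s))

section Semigroup

variable {X : Type*} [NormedAddCommGroup X] [NormedSpace ℝ X] {f : HR → X}

theorem conv_eq_integral_vmul (ψ : ℝ → ℝ) (f : HR → X) (h : HR) :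
    conv ψ f h = ∫ u, ψ u • f (vmul (-u) h) := by
  simp only [conv, vmul, sub_eq_add_neg]

theorem vmul_vmul (s t : ℝ) (h : HR) : vmul s (vmul t h) = vmul (s + t) h := by
  simp only [vmul, add_comm s t, add_assoc]

theorem continuous_vmul : Continuous fun p : ℝ × HR => vmul p.1 p.2 := by
  unfold vmul; fun_prop

/-- The semigroup identity `Q_{2a} * f = P_a * (Q_a * f)`. -/
theorem conv_Qker_two_mul [CompleteSpace X] (hf : Continuous f)
    (hc : HasCompactSupport f) {a : ℝ} (ha : 0 < a)
    (h : HR) :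
    conv (Qker (2 * a)) f h = ∫ w, Pker a w • conv (Qker a) f (vmul (-w) h) := by
  obtain ⟨M, hM⟩ := hc.exists_bound_of_continuous hf
  have hint : Integrable (Function.uncurry fun u w : ℝ =>
      (Pker a w * Qker a (u - w)) • f (vmul (-u) h)) (volume.prod volume) :=
    ((integrable_Pker ha).convolution_integrand (ContinuousLinearMap.mul ℝ ℝ)
      (integrable_Qker ha)).smul_bdd M
      (continuous_vmul.comp (by fun_prop : Continuous fun p : ℝ × ℝ => (-p.1, h)) |> hf.comp
        |>.aestronglyMeasurable)
      (Eventually.of_forall fun p => hM _)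
  have h0 : ∀ᵐ u : ℝ, u ≠ 0 := by
    simp [ae_iff, measure_singleton]
  calc conv (Qker (2 * a)) f h = ∫ u, ∫ w, (Pker a w * Qker a (u - w)) • f (vmul (-u) h) := by
        rw [conv_eq_integral_vmul]
        refine integral_congr_ae ?_
        filter_upwards [h0] with u hu
        rw [integral_smul_const, ← integral_Pker_sub_mul_Qker ha hu,
          ← integral_sub_left_eq_self _ volume u]
        simp only [sub_sub_cancel]
    _ = ∫ w, ∫ u, (Pker a w * Qker a (u - w)) • f (vmul (-u) h) := integral_integral_swap hint
    _ = _ := by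
        refine integral_congr_ae (Eventually.of_forall fun w => ?_)
        simp only [mul_smul]
        rw [integral_smul, conv_eq_integral_vmul, ← integral_sub_right_eq_self
          (fun u => Qker a u • f (vmul (-u) (vmul (-w) h))) w]
        have e : ∀ u : ℝ, -(u - w) + -w = -u := fun u => by ring
        simp only [vmul_vmul, e]

theorem enorm_conv_Qker_two_mul_vmul_sub_le [CompleteSpace X] (hf : Continuous f)
    (hc : HasCompactSupport f)
    {a : ℝ} (ha : 0 < a) (s : ℝ) (h : HR) :
    ‖conv (Qker (2 * a)) f (vmul s h) - conv (Qker (2 * a)) f h‖ₑ ≤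
      ∫⁻ w, ‖Pker a (w + s) - Pker a w‖ₑ * ‖conv (Qker a) f (vmul (-w) h)‖ₑ := by
  obtain ⟨M, hM⟩ := hc.exists_bound_of_continuous hf
  have hbd : ∀ h, ‖conv (Qker a) f h‖ ≤ ∫ u, ‖Qker a u‖ * M := fun h =>
    norm_integral_le_of_norm_le ((integrable_Qker ha).norm.mul_const M)
      (Eventually.of_forall fun u => by
        rw [norm_smul]; exact mul_le_mul_of_nonneg_left (hM _) (norm_nonneg _))
  have hm : AEStronglyMeasurable (fun w : ℝ => conv (Qker a) f (vmul (-w) h)) :=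
    ((stronglyMeasurable_conv_Qker hf).comp_measurable (g := fun w : ℝ => (a, vmul (-w) h))
      (by unfold vmul; fun_prop)).aestronglyMeasurable
  have hi1 : Integrable fun w => Pker a w • conv (Qker a) f (vmul (-w) h) :=
    (integrable_Pker ha).smul_bdd _ hm (Eventually.of_forall fun w => hbd _)
  have hi2 : Integrable fun w => Pker a (w + s) • conv (Qker a) f (vmul (-w) h) :=
    ((integrable_Pker ha).comp_add_right s).smul_bdd _ hm (Eventually.of_forall fun w => hbd _)
  have e : conv (Qker (2 * a)) f (vmul s h) =
      ∫ w, Pker a (w + s) • conv (Qker a) f (vmul (-w) h) := by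
    rw [conv_Qker_two_mul hf hc ha, ← integral_add_right_eq_self _ s]
    simp only [vmul_vmul, neg_add_rev, neg_add_cancel_comm]
  rw [e, conv_Qker_two_mul hf hc ha, ← integral_sub hi2 hi1]
  refine (enorm_integral_le_lintegral_enorm _).trans (le_of_eq ?_)
  simp only [← sub_smul, enorm_smul]

theorem lintegral_enorm_Pker_add_sub_le {a s : ℝ} (ha : 0 < a) (hs : 0 ≤ s) :
    ∫⁻ w, ‖Pker a (w + s) - Pker a w‖ₑ ≤ ENNReal.ofReal (s / a) := by
  have hi := (((integrable_Pker ha).comp_add_right s).add (integrable_Pker ha)).const_mul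
    (s / (2 * a))
  calc ∫⁻ w, ‖Pker a (w + s) - Pker a w‖ₑ
      ≤ ∫⁻ w, ENNReal.ofReal (s / (2 * a) * (Pker a (w + s) + Pker a w)) := by
        refine lintegral_mono fun w => ?_
        rw [Real.enorm_eq_ofReal_abs]
        exact ENNReal.ofReal_le_ofReal (abs_Pker_add_sub_le ha hs w)
    _ = ENNReal.ofReal (∫ w, s / (2 * a) * (Pker a (w + s) + Pker a w)) :=
        (ofReal_integral_eq_lintegral_ofReal hi (Eventually.of_forall fun w =>
          mul_nonneg (by positivity) (add_nonneg (Pker_nonneg ha _) (Pker_nonneg ha _)))).symm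
    _ = _ := by
        rw [integral_const_mul, integral_add ((integrable_Pker ha).comp_add_right s)
          (integrable_Pker ha), integral_add_right_eq_self (Pker a) s, integral_Pker ha]
        congr 1
        field_simp
        norm_num

/-- Young's inequality for convolutions along the center. -/
theorem lintegral_Lp_conv_le {p : ℝ} (hp : 1 ≤ p) {k : ℝ → ℝ≥0∞} (hk : Measurable k)
    {G : HR → ℝ≥0∞} (hG : Measurable G) :
    (∫⁻ h, (∫⁻ w, k w * G (vmul (-w) h)) ^ p) ^ (1 / p) ≤
      (∫⁻ w, k w) * (∫⁻ h, G h ^ p) ^ (1 / p) := by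
  have hp0 : 0 < p := by linarith
  have hF : Measurable (Function.uncurry fun w h => k w * G (vmul (-w) h)) :=
    (hk.comp measurable_fst).mul (hG.comp (by unfold vmul; fun_prop))
  refine (lintegral_Lp_lintegral_le hp hF).trans ?_
  rw [← lintegral_mul_const _ hk]
  refine lintegral_mono fun w => le_of_eq ?_
  have hGw : Measurable fun h => G (vmul (-w) h) ^ p :=
    (hG.comp (measurable_vmul _)).pow_const p
  simp only [ENNReal.mul_rpow_of_nonneg _ _ hp0.le]
  rw [lintegral_const_mul _ hGw,
    (measurePreserving_vmul (-w)).lintegral_comp (hG.pow_const p),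
    ENNReal.mul_rpow_of_nonneg _ _ (by positivity), ← ENNReal.rpow_mul, mul_one_div_cancel hp0.ne',
    ENNReal.rpow_one]

theorem lintegral_Lp_conv_Qker_sub_le [CompleteSpace X] (hf : Continuous f)
    (hc : HasCompactSupport f)
    {p : ℝ} (hp : 1 ≤ p) {r s : ℝ} (hr : 0 < r) (hs : 0 ≤ s) :
    (∫⁻ h, ‖conv (Qker r) f (vmul s h) - conv (Qker r) f h‖ₑ ^ p) ^ (1 / p) ≤
      ENNReal.ofReal (2 * s / r) * (∫⁻ h, ‖conv (Qker (r / 2)) f h‖ₑ ^ p) ^ (1 / p) := by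
  have hp0 : 0 < p := by linarith
  have ha : 0 < r / 2 := by positivity
  have hpt := enorm_conv_Qker_two_mul_vmul_sub_le hf hc ha s
  rw [mul_div_cancel₀ r two_ne_zero] at hpt
  have hk : Measurable fun w => ‖Pker (r / 2) (w + s) - Pker (r / 2) w‖ₑ := by
    unfold Pker; fun_prop
  have hG : Measurable fun h => ‖conv (Qker (r / 2)) f h‖ₑ :=
    ((stronglyMeasurable_conv_Qker hf).comp_measurable (g := fun h => (r / 2, h))
      (by fun_prop)).enorm
  calc _ ≤ (∫⁻ h, (∫⁻ w, ‖Pker (r / 2) (w + s) - Pker (r / 2) w‖ₑ *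
        ‖conv (Qker (r / 2)) f (vmul (-w) h)‖ₑ) ^ p) ^ (1 / p) := by
        gcongr with h; exact hpt h
    _ ≤ _ := lintegral_Lp_conv_le hp hk hG
    _ ≤ _ := by
        gcongr
        refine (lintegral_enorm_Pker_add_sub_le ha hs).trans (le_of_eq ?_)
        congr 1
        field_simp

theorem lintegral_enorm_conv_Qker_rpow_lt_top (hf : Continuous f) (hc : HasCompactSupport f)
    {p : ℝ} (hp : 1 ≤ p) {t : ℝ} (ht : 0 < t) :
    ∫⁻ h, ‖conv (Qker t) f h‖ₑ ^ p < ∞ := by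
  have hp0 : 0 < p := by linarith
  have hG : Measurable fun h => ‖f h‖ₑ := hf.enorm.measurable
  have hk : Measurable fun u => ‖Qker t u‖ₑ := by unfold Qker; fun_prop
  have hfp : ∫⁻ h, ‖f h‖ₑ ^ p < ∞ := by
    have h := lintegral_rpow_enorm_lt_top_of_eLpNorm_lt_top (p := ENNReal.ofReal p) (by simpa)
      (by simp) (hf.memLp_of_hasCompactSupport (μ := volume) hc).2
    rwa [ENNReal.toReal_ofReal hp0.le] at h
  have h1 : (∫⁻ h, ‖conv (Qker t) f h‖ₑ ^ p) ^ (1 / p) ≤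
      (∫⁻ u, ‖Qker t u‖ₑ) * (∫⁻ h, ‖f h‖ₑ ^ p) ^ (1 / p) := by
    refine le_trans ?_ (lintegral_Lp_conv_le hp hk hG)
    gcongr with h
    rw [conv_eq_integral_vmul]
    refine (enorm_integral_le_lintegral_enorm _).trans (le_of_eq ?_)
    simp only [enorm_smul]
  have h2 := h1.trans_lt (ENNReal.mul_lt_top (integrable_Qker ht).2
    (ENNReal.rpow_lt_top_of_nonneg (by positivity) hfp.ne))
  exact (ENNReal.rpow_lt_top_iff_of_pos (by positivity)).1 h2

theorem lintegral_Lp_vmul_sub_le [CompleteSpace X] (hf : Continuous f) (hc : HasCompactSupport f)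
    {p : ℝ} (hp : 1 ≤ p) {s : ℝ} (hs : 0 < s) :
    (∫⁻ h, ‖f (vmul s h) - f h‖ₑ ^ p) ^ (1 / p) ≤
      2 * (∫⁻ r in Set.Ioo 0 s, (∫⁻ h, ‖conv (Qker r) f h‖ₑ ^ p) ^ (1 / p)) +
      ∫⁻ r in Set.Ioi s, ENNReal.ofReal (2 * s / r) *
        (∫⁻ h, ‖conv (Qker (r / 2)) f h‖ₑ ^ p) ^ (1 / p) := by
  have hp0 : 0 < p := by linarith
  have hF : Measurable (Function.uncurry fun r h => ‖conv (Qker r) f h‖ₑ) :=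
    (stronglyMeasurable_conv_Qker hf).enorm
  have hF1 : Measurable (Function.uncurry fun r h => ‖conv (Qker r) f (vmul s h)‖ₑ) :=
    hF.comp (by unfold vmul; fun_prop : Measurable fun q : ℝ × HR => (q.1, vmul s q.2))
  have hF2 : Measurable (Function.uncurry fun r h =>
      ‖conv (Qker r) f (vmul s h) - conv (Qker r) f h‖ₑ) :=
    (((stronglyMeasurable_conv_Qker hf).comp_measurable
      (by unfold vmul; fun_prop : Measurable fun q : ℝ × HR => (q.1, vmul s q.2))).sub
      (stronglyMeasurable_conv_Qker hf)).enorm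
  have hm1 := hF1.lintegral_prod_left (μ := volume.restrict (Set.Ioo 0 s))
  have hm := hF.lintegral_prod_left (μ := volume.restrict (Set.Ioo 0 s))
  have hm2 := hF2.lintegral_prod_left (μ := volume.restrict (Set.Ioi s))
  have htr : ∀ r, ∫⁻ h, ‖conv (Qker r) f (vmul s h)‖ₑ ^ p = ∫⁻ h, ‖conv (Qker r) f h‖ₑ ^ p :=
    fun r => (measurePreserving_vmul s).lintegral_comp
      (f := fun h => ‖conv (Qker r) f h‖ₑ ^ p)
      ((hF.comp measurable_prodMk_left).pow_const p)
  calc _ ≤ (∫⁻ h, ((∫⁻ r in Set.Ioo 0 s, ‖conv (Qker r) f (vmul s h)‖ₑ) +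
      (∫⁻ r in Set.Ioo 0 s, ‖conv (Qker r) f h‖ₑ) +
      ∫⁻ r in Set.Ioi s, ‖conv (Qker r) f (vmul s h) - conv (Qker r) f h‖ₑ) ^ p) ^ (1 / p) := by
        gcongr with h
        exact enorm_vmul_sub_le hf hc h hs
    _ ≤ _ := ENNReal.lintegral_Lp_add_le (hm1.add hm).aemeasurable hm2.aemeasurable hp
    _ ≤ _ := by
        gcongr ?_ + ?_
        · refine (ENNReal.lintegral_Lp_add_le hm1.aemeasurable hm.aemeasurable hp).trans ?_
          rw [two_mul]
          refine add_le_add ?_ (lintegral_Lp_lintegral_le hp hF)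
          refine (lintegral_Lp_lintegral_le hp hF1).trans (le_of_eq ?_)
          simp only [htr]
        · refine (lintegral_Lp_lintegral_le hp hF2).trans ?_
          refine setLIntegral_mono' measurableSet_Ioi fun r hr => ?_
          exact lintegral_Lp_conv_Qker_sub_le hf hc hp (hs.trans hr) hs.le

end Semigroup

end HR

theorem integral_norm_rpow_eq_toReal {α E : Type*} [MeasurableSpace α] {μ : Measure α}
    [NormedAddCommGroup E] {p : ℝ} (hp : 0 ≤ p) {g : α → E} (hg : AEStronglyMeasurable g μ) :
    ∫ x, ‖g x‖ ^ p ∂μ = (∫⁻ x, ‖g x‖ₑ ^ p ∂μ).toReal := by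
  rw [integral_eq_lintegral_of_nonneg_ae (Filter.Eventually.of_forall fun x => by positivity)
    (hg.norm.aemeasurable.pow_const p).aestronglyMeasurable]
  simp only [← ENNReal.ofReal_rpow_of_nonneg (norm_nonneg _) hp, ofReal_norm]

theorem ofReal_integral_norm_rpow_le {α E : Type*} [MeasurableSpace α] {μ : Measure α}
    [NormedAddCommGroup E] {p : ℝ} (hp : 0 ≤ p) {g : α → E} (hg : AEStronglyMeasurable g μ) :
    ENNReal.ofReal (∫ x, ‖g x‖ ^ p ∂μ) ≤ ∫⁻ x, ‖g x‖ₑ ^ p ∂μ := by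
  rw [integral_norm_rpow_eq_toReal hp hg]
  exact ENNReal.ofReal_toReal_le

open HR in
/-- Lemma 2.6: the vertical Besov-type seminorm is controlled by the
generalized Littlewood–Paley `g`-function of `f`. -/
theorem vertical_controlled_by_g_function :
    ∃ C : ℝ, 0 < C ∧
      ∀ p q : ℝ, 1 ≤ p → 1 ≤ q →
        ∀ (X : Type) [NormedAddCommGroup X] [NormedSpace ℝ X] [CompleteSpace X],
          ∀ f : HR → X, ContDiff ℝ (⊤ : ℕ∞) f → HasCompactSupport f →
            (∫⁻ t in Set.Ioi (0 : ℝ),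
                ENNReal.ofReal
                  ((∫ h : HR, ‖f (vmul t h) - f h‖ ^ p) ^ (q / p) / t ^ (1 + q / 2))) ^ (1 / q) ≤
              ENNReal.ofReal C *
                (∫⁻ t in Set.Ioi (0 : ℝ),
                  ENNReal.ofReal
                    (t ^ (q / 2 - 1) *
                      ((∫ h : HR, ‖conv (Qker t) f h‖ ^ p) ^ (1 / p)) ^ q)) ^ (1 / q) := by
  set I : ℝ≥0∞ :=
    ∫⁻ v in Set.Ioi (0 : ℝ), hardyKernel v * ENNReal.ofReal (v ^ (-(1 / 2) : ℝ)) with hI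
  have hI_top : I ≠ ∞ := lintegral_hardyKernel_lt_top.ne
  refine ⟨I.toReal + 1, by positivity, fun p q hp hq X _ _ _ f hf hc => ?_⟩
  have hp0 : 0 < p := by linarith
  have hq0 : 0 < q := by linarith
  have hIC : I ≤ ENNReal.ofReal (I.toReal + 1) := by
    rw [ENNReal.le_ofReal_iff_toReal_le hI_top (by positivity)]
    linarith
  have hQ : Measurable (Function.uncurry fun r h => ‖conv (Qker r) f h‖ₑ) :=
    (stronglyMeasurable_conv_Qker hf.continuous).enorm
  have hB : Measurable fun r => (∫⁻ h, ‖conv (Qker r) f h‖ₑ ^ p) ^ (1 / p) :=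
    ((hQ.pow_const p).lintegral_prod_right' (ν := volume)).pow_const _
  have hardy := lintegral_hardy_le hq
    (A := fun s => (∫⁻ h, ‖f (vmul s h) - f h‖ₑ ^ p) ^ (1 / p)) hB fun s hs =>
      lintegral_le_lintegral_hardyKernel
        (A := fun s => (∫⁻ h, ‖f (vmul s h) - f h‖ₑ ^ p) ^ (1 / p)) hB hs
        (lintegral_Lp_vmul_sub_le hf.continuous hc hp hs)
  refine le_trans ?_ (hardy.trans (mul_le_mul' hIC ?_))
  · refine ENNReal.rpow_le_rpow ?_ (by positivity)
    refine setLIntegral_mono' measurableSet_Ioi fun t ht => ?_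
    have ht : 0 < t := ht
    rw [div_eq_mul_inv, ← Real.rpow_neg ht.le, ENNReal.ofReal_mul (by positivity),
      ← ENNReal.ofReal_rpow_of_nonneg (by positivity) (by positivity), ← ENNReal.rpow_mul,
      one_div_mul_eq_div]
    gcongr
    exact ofReal_integral_norm_rpow_le hp0.le
      ((hf.continuous.comp (by unfold vmul; fun_prop)).sub hf.continuous).aestronglyMeasurable
  · refine ENNReal.rpow_le_rpow ?_ (by positivity)
    refine setLIntegral_mono' measurableSet_Ioi fun t ht => ?_
    have ht : 0 < t := ht
    rw [ENNReal.ofReal_mul (by positivity),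
      ← ENNReal.ofReal_rpow_of_nonneg (by positivity) hq0.le,
      ← ENNReal.ofReal_rpow_of_nonneg (p := 1 / p) (by positivity) (by positivity)]
    gcongr
    have hm : AEStronglyMeasurable (fun h => conv (Qker t) f h) :=
      ((stronglyMeasurable_conv_Qker hf.continuous).comp_measurable
        measurable_prodMk_left).aestronglyMeasurable
    rw [integral_norm_rpow_eq_toReal hp0.le hm,
      ENNReal.ofReal_toReal (lintegral_enorm_conv_Qker_rpow_lt_top hf.continuous hc hp ht).ne]
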